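/- Write c₁ = e·H + ε and D = d·H + δ with e = B(H,c₁)/B(H,H) and d = B(H,D)/B(H,H), so that B(H,ε) = B(H,δ) = 0. Then B(H,H)·Δ_{H,D} − Δ = −B(r·δ − ε, r·δ − ε)/(2r²). -/

import Mathlib

/-!
Twisting by `D` multiplies the Chern character by `exp (-D)`, which does not change `Δ`. So `Δ` and
`Δ_{H,D}` can both be computed from the twisted character `(r, v, s)`, and
`B(H, H) Δ_{H,D} - Δ = (B(H, v)² / B(H, H) - B(v, v)) / (2r²)` no longer involves `s`. By Pythagoras
the right-hand side only sees the component of `v = c₁ - r D` orthogonal to `H`, which is `ε - r δ`.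
-/

open LinearMap (BilinForm)

theorem apply_smul_add_self_of_orthogonal {R V : Type*} [CommRing R] [AddCommGroup V] [Module R V]
    {B : BilinForm R V} {H w : V} (hHw : B H w = 0) (hwH : B w H = 0) (a : R) :
    B (a • H + w) (a • H + w) = a ^ 2 * B H H + B w w := by
  simp only [map_add, map_smul, LinearMap.add_apply, LinearMap.smul_apply, smul_eq_mul, hHw, hwH]
  ring

section Field

variable {K V : Type*} [Field K] [AddCommGroup V] [Module K V] {B : BilinForm K V} {H : V}

theorem apply_eq_zero_of_eq_div_smul_add (hH : B H H ≠ 0) {a : K} {v w : V}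
    (ha : a = B H v / B H H) (hv : v = a • H + w) : B H w = 0 := by
  have h : B H v = B H v + B H w := by
    conv_lhs => rw [hv, map_add, map_smul, smul_eq_mul, ha, div_mul_cancel₀ _ hH]
  exact left_eq_add.mp h

theorem sq_div_sub_apply_self_of_orthogonal {w : V} (hHw : B H w = 0) (hwH : B w H = 0)
    (a : K) :
    B H (a • H + w) ^ 2 / B H H - B (a • H + w) (a • H + w) = -B w w := by
  have hH_apply : B H (a • H + w) = a * B H H := by
    rw [map_add, map_smul, hHw, add_zero, smul_eq_mul]
  rw [hH_apply, apply_smul_add_self_of_orthogonal hHw hwH]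
  field_simp
  ring

end Field

/-- The part of a Chern character on a surface seen by discriminants: the rank, the first Chern
class as a vector of `V`, and the degree of the second Chern character as a scalar of `K`. -/
structure ChernCharacter (K V : Type*) where
  rank : K
  ch₁ : V
  ch₂ : K

namespace ChernCharacter

variable {K V : Type*} [Field K] [AddCommGroup V] [Module K V]

/-- The twisted Chern character `chᴰ = exp (-D) · ch`, where products of divisors are evaluated
by the intersection pairing `B`. -/
def twist (B : BilinForm K V) (D : V) (v : ChernCharacter K V) : ChernCharacter K V where
  rank := v.rank
  ch₁ := v.ch₁ - v.rank • D
  ch₂ := v.ch₂ - B D v.ch₁ + (v.rank / 2) * B D D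

/-- The discriminant `Δ`, normalised by the square of the rank. -/
def discriminant (B : BilinForm K V) (v : ChernCharacter K V) : K :=
  B v.ch₁ v.ch₁ / (2 * v.rank ^ 2) - v.ch₂ / v.rank

/-- The slope `μ_H`, normalised by the degree `B H H` of the polarisation. The twisted slope
`μ_{H,D}` is the slope of `v.twist B D`. -/
def slope (B : BilinForm K V) (H : V) (v : ChernCharacter K V) : K :=
  B H v.ch₁ / (v.rank * B H H)

/-- The discriminant `Δ_H` in which `ch₁` enters only through its slope. The twisted discriminant
`Δ_{H,D}` is the slope discriminant of `v.twist B D`. -/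
def slopeDiscriminant (B : BilinForm K V) (H : V) (v : ChernCharacter K V) : K :=
  (1 / 2) * v.slope B H ^ 2 - v.ch₂ / (v.rank * B H H)

variable {B : BilinForm K V} {H : V} {v : ChernCharacter K V}

theorem discriminant_twist [NeZero (2 : K)] (hB : B.IsSymm) (hr : v.rank ≠ 0) (D : V) :
    (v.twist B D).discriminant B = v.discriminant B := by
  have h_sq : B (v.ch₁ - v.rank • D) (v.ch₁ - v.rank • D) =
      B v.ch₁ v.ch₁ - 2 * v.rank * B D v.ch₁ + v.rank ^ 2 * B D D := by
    simp only [map_sub, map_smul, LinearMap.sub_apply, LinearMap.smul_apply, smul_eq_mul,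
      hB.eq v.ch₁ D]
    ring
  simp only [discriminant, twist, h_sq]
  field_simp
  ring

theorem mul_slopeDiscriminant_sub_discriminant (hH : B H H ≠ 0) (hr : v.rank ≠ 0) :
    B H H * v.slopeDiscriminant B H - v.discriminant B =
      (B H v.ch₁ ^ 2 / B H H - B v.ch₁ v.ch₁) / (2 * v.rank ^ 2) := by
  simp only [slopeDiscriminant, discriminant, slope]
  field_simp
  ring

end ChernCharacter

theorem stmt_0_general {K V : Type*} [Field K] [NeZero (2 : K)] [AddCommGroup V] [Module K V]
    {B : BilinForm K V} (hB : B.IsSymm) {H : V} (hH : B H H ≠ 0)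
    {v : ChernCharacter K V} (hr : v.rank ≠ 0) {D : V} {e d : K} {ε δ : V}
    (he : e = B H v.ch₁ / B H H) (hd : d = B H D / B H H)
    (hch₁ : v.ch₁ = e • H + ε) (hD : D = d • H + δ) :
    B H H * (v.twist B D).slopeDiscriminant B H - v.discriminant B =
      -B (v.rank • δ - ε) (v.rank • δ - ε) / (2 * v.rank ^ 2) := by
  have hε : B H ε = 0 := apply_eq_zero_of_eq_div_smul_add hH he hch₁
  have hδ : B H δ = 0 := apply_eq_zero_of_eq_div_smul_add hH hd hD
  have h_orth : B H (ε - v.rank • δ) = 0 := by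
    rw [map_sub, map_smul, hε, hδ, smul_zero, sub_zero]
  have h_orth' : B (ε - v.rank • δ) H = 0 := (hB.eq _ _).trans h_orth
  have h_twist : (v.twist B D).ch₁ = (e - v.rank * d) • H + (ε - v.rank • δ) := by
    change v.ch₁ - v.rank • D = _
    rw [hch₁, hD]
    module
  calc B H H * (v.twist B D).slopeDiscriminant B H - v.discriminant B
      = B H H * (v.twist B D).slopeDiscriminant B H - (v.twist B D).discriminant B := by
        rw [ChernCharacter.discriminant_twist hB hr D]
    _ = (B H (v.twist B D).ch₁ ^ 2 / B H H - B (v.twist B D).ch₁ (v.twist B D).ch₁) /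
          (2 * v.rank ^ 2) :=
        ChernCharacter.mul_slopeDiscriminant_sub_discriminant (v := v.twist B D) hH hr
    _ = -B (ε - v.rank • δ) (ε - v.rank • δ) / (2 * v.rank ^ 2) := by
        rw [h_twist, sq_div_sub_apply_self_of_orthogonal h_orth h_orth']
    _ = -B (v.rank • δ - ε) (v.rank • δ - ε) / (2 * v.rank ^ 2) := by
        rw [← neg_sub ε, LinearMap.map_neg₂, map_neg, neg_neg]

/-- With c₁ = e·H + ε and D = d·H + δ, where e = B(H,c₁)/B(H,H) and
d = B(H,D)/B(H,H) (so B(H,ε) = B(H,δ) = 0), one has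
B(H,H)·Δ_{H,D} − Δ = −B(r·δ − ε, r·δ − ε)/(2r²). -/
theorem stmt_0 (V : Type*) [AddCommGroup V] [Module ℝ V]
    (B : V →ₗ[ℝ] V →ₗ[ℝ] ℝ) (hsymm : ∀ v w : V, B v w = B w v)
    (H : V) (hH : B H H ≠ 0)
    (r : ℝ) (hr : r ≠ 0) (c₁ : V) (c₂ : ℝ) (D : V)
    (e d : ℝ) (ε δ : V)
    (he : e = B H c₁ / B H H) (hd : d = B H D / B H H)
    (hc₁ : c₁ = e • H + ε) (hD : D = d • H + δ)
    (hε : B H ε = 0) (hδ : B H δ = 0) :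
    B H H * ((1/2) * (B H (c₁ - r • D) / (r * B H H))^2
        - (c₂ - B D c₁ + (r/2) * B D D) / (r * B H H))
      - (B c₁ c₁ / (2 * r^2) - c₂ / r)
    = - B (r • δ - ε) (r • δ - ε) / (2 * r^2) :=
  stmt_0_general (v := ⟨r, c₁, c₂⟩) ⟨hsymm⟩ hH hr he hd hc₁ hD
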